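/- arXiv:cs/0104003 — 2 statements merged into one kernel-verified Lean document; each statement's English description precedes it below -/
import Mathlib

section
/- Moded-to-chain transformation: Let C be a moded clause p(t₀,tₙ′) ← q₁(t₀′,t₁), q₂(t₁′,t₂), …, qₙ(t_{n-1}′,tₙ) (n ≥ 0), and for j = 0,…,n+1 let Πⱼ = (var(t₀) ∪ ⋯ ∪ var(t_{j-1})) ∩ (var(tⱼ′) ∪ ⋯ ∪ var(tₙ′)). Let Σⱼ be the list [X₁,ⱼ,…,X_{dⱼ},ⱼ | St] where {X₁,ⱼ,…,X_{dⱼ},ⱼ} = Πⱼ if Πⱼ ≠ ∅, and Σⱼ = St if Πⱼ = ∅. Then the chain clause Ĉ: p̂(U₀,Uₙ′) ← h₀(U₀,U₀′), q̂₁(U₀′,U₁), h₁(U₁,U₁′), q̂₂(U₁′,U₂), …, q̂ₙ(U_{n-1}′,Uₙ), hₙ(Uₙ,Uₙ′) (with the Uᵢ, Uᵢ′ distinct variables) is logically implied by: C, the standard equality theory for C, the 'iff' version of function substitutivity for the list constructor ([X|Y]=[X′|Y′] ↔ X=X′ ∧ Y=Y′), and the completed ('iff') definitions of p̂(⟨St|X⟩,⟨St|Y⟩)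 ← p(X,Y), of q̂ⱼ(⟨St|X⟩,⟨St|Y⟩) ← qⱼ(X,Y) for j = 1,…,n, and of hⱼ(⟨Σⱼ|tⱼ⟩,⟨Σ_{j+1}|tⱼ′⟩) ← for j = 0,…,n (writing t₀′ also as t₀ position-wise, i.e., h₀ maps ⟨St|t₀⟩ to ⟨Σ₁|t₀′⟩ and hₙ maps ⟨Σₙ|tₙ⟩ to ⟨St|tₙ′⟩), where p̂, the q̂ⱼ and the hⱼ are predicate symbols not occurring in C. -/
namespace ModedChain

/-- First-order terms over function symbols `F` (with arities `ar`), a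
distinguished binary list constructor `cons` (written `[·|·]`), and variables
`V`. -/
inductive Tm (F : Type) (ar : F → ℕ) (V : Type) : Type
  | var : V → Tm F ar V
  | fn : (f : F) → (Fin (ar f) → Tm F ar V) → Tm F ar V
  | cons : Tm F ar V → Tm F ar V → Tm F ar V

/-- A structure interpreting the function symbols, the list constructor, and the
distinguished binary equality predicate. -/
structure Struc (F : Type) (ar : F → ℕ) where
  D : Type
  nonempty : Nonempty D
  fnI : (f : F) → (Fin (ar f) → D) → D
  consI : D → D → D
  eqI : D → D → Prop

variable {F V : Type} {ar : F → ℕ}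

def Tm.eval (M : Struc F ar) (v : V → M.D) : Tm F ar V → M.D
  | .var x => v x
  | .fn f args => M.fnI f fun i => (args i).eval M v
  | .cons s t => M.consI (s.eval M v) (t.eval M v)

/-- The variable `x` occurs in the term. -/
def Tm.varOccurs (x : V) : Tm F ar V → Prop
  | .var y => x = y
  | .fn _ args => ∃ i, (args i).varOccurs x
  | .cons s t => s.varOccurs x ∨ t.varOccurs x

/-- The function symbol `g` occurs in the term. -/
def Tm.fnOccurs (g : F) : Tm F ar V → Prop
  | .var _ => False
  | .fn f args => g = f ∨ ∃ i, (args i).fnOccurs g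
  | .cons s t => s.fnOccurs g ∨ t.fnOccurs g

/-- The list constructor occurs in the term. -/
def Tm.consOccurs : Tm F ar V → Prop
  | .var _ => False
  | .fn _ args => ∃ i, (args i).consOccurs
  | .cons _ _ => True

/-- The term `[X₁,…,X_d | St]`. -/
def stackList (L : List V) (St : V) : Tm F ar V :=
  L.foldr (fun z acc => Tm.cons (Tm.var z) acc) (Tm.var St)

/-!
Satisfying the chain body provides one valuation `wⱼ` per link `hⱼ`. Because `[·|·]` is injective
up to equality, `q̂ⱼ` makes `w_{j-1}` and `wⱼ` agree, up to equality, on the stack variable and on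
all variables of `Πⱼ`. By modedness each variable is bound by a single output `t k`, so the
valuations glue to one `v` that follows `w k` on `var(t k)`. A variable bound in `t k` and read in
`t' i` belongs to every `Πⱼ` with `k < j ≤ i`, hence `v` and `w i` agree on `var(t' i)`. So `v`
satisfies the body of `C`, and since `Σ₀ = Σₙ₊₁ = St` its head carries the same stack at both ends.
-/

/-- The clause `p(t₀,tₙ′) ← q₁(t₀′,t₁), …, qₙ(t_{n-1}′,tₙ)` is moded; it is encoded by its families
`t` of unprimed and `t'` of primed terms. -/
structure IsModed {n : ℕ} (t t' : Fin (n + 1) → Tm F ar V) : Prop where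
  exists_le_varOccurs : ∀ i x, (t' i).varOccurs x → ∃ k ≤ i, (t k).varOccurs x
  not_varOccurs_and : ∀ i j, i ≠ j → ∀ x, ¬((t i).varOccurs x ∧ (t j).varOccurs x)

/-- The set `Πⱼ = (var(t₀) ∪ ⋯ ∪ var(t_{j-1})) ∩ (var(tⱼ′) ∪ ⋯ ∪ var(tₙ′))` of variables that have
to be passed on the stack to the link `hⱼ`. -/
def passOn {n : ℕ} (t t' : Fin (n + 1) → Tm F ar V) (j : Fin (n + 2)) : Set V :=
  {x | (∃ i : Fin (n + 1), (i : ℕ) < (j : ℕ) ∧ (t i).varOccurs x) ∧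
    (∃ k : Fin (n + 1), (j : ℕ) ≤ (k : ℕ) ∧ (t' k).varOccurs x)}

/-- The term `s` is of the form `[X₁,…,X_d | St]` with `{X₁,…,X_d} = S`. Order and repetitions of
the `Xᵢ` are arbitrary. -/
def IsStackListOf (S : Set V) (St : V) (s : Tm F ar V) : Prop :=
  ∃ L : List V, (∀ x, x ∈ L ↔ x ∈ S) ∧ s = stackList L St

/-- The interpretation that the completed definition of `r̂(⟨St|X⟩,⟨St|Y⟩) ← r(X,Y)` assigns to
`r̂`, given the interpretation `r` of the original predicate. -/
def StackedRel (M : Struc F ar) (r : M.D → M.D → Prop) (z z' : M.D) : Prop :=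
  ∃ st x y, M.eqI z (M.consI st x) ∧ M.eqI z' (M.consI st y) ∧ r x y

/-- The list constructor is injective up to the equality predicate: the left-to-right half of the
«iff» version of its function substitutivity axiom. -/
def ConsInjective (M : Struc F ar) : Prop :=
  ∀ a b a' b', M.eqI (M.consI a b) (M.consI a' b') → M.eqI a a' ∧ M.eqI b b'

theorem rel_of_forall_castSucc_succ {α : Type*} {r : α → α → Prop} (hrefl : ∀ a, r a a)
    (htrans : ∀ {a b c}, r a b → r b c → r a c) {n : ℕ} {f : Fin (n + 1) → α}
    {k i : Fin (n + 1)} (hki : k ≤ i)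
    (h : ∀ j : Fin n, k < j.succ → j.succ ≤ i → r (f j.castSucc) (f j.succ)) :
    r (f k) (f i) := by
  induction i using Fin.induction with
  | zero => exact Fin.le_zero_iff.1 hki ▸ hrefl _
  | succ j ih =>
    obtain rfl | hlt := hki.eq_or_lt
    · exact hrefl _
    · have hji : j.castSucc ≤ j.succ := Fin.castSucc_lt_succ.le
      exact htrans (ih (Fin.le_castSucc_iff.2 hlt) fun m hkm hmj => h m hkm (hmj.trans hji))
        (h j hlt le_rfl)

theorem exists_eqOn_of_pairwise_disjoint {ι α β : Type*} [Nonempty β] {S : ι → Set α}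
    (hS : Pairwise (Function.onFun Disjoint S)) (w : ι → α → β) :
    ∃ v : α → β, ∀ i, Set.EqOn v (w i) (S i) := by
  have hinj := Subtype.val_injective.comp (Set.sigmaToiUnion_injective S hS)
  exact ⟨Function.extend _ (fun p : Σ i, S i => w p.1 p.2) (Classical.arbitrary _),
    fun i x hx => hinj.extend_apply _ _ ⟨i, x, hx⟩⟩

section PassOn

variable {n : ℕ} {t t' : Fin (n + 1) → Tm F ar V}

theorem passOn_zero : passOn t t' 0 = ∅ :=
  Set.eq_empty_of_forall_notMem fun _ ⟨⟨_, hi, _⟩, _⟩ => Nat.not_lt_zero _ hi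

theorem passOn_last : passOn t t' (Fin.last (n + 1)) = ∅ :=
  Set.eq_empty_of_forall_notMem fun _ ⟨_, k, hk, _⟩ => k.isLt.not_ge hk

theorem rel_of_forall_passOn {α : Type*} {r : α → α → Prop} (hrefl : ∀ a, r a a)
    (htrans : ∀ {a b c}, r a b → r b c → r a c) {w : Fin (n + 1) → V → α}
    (hw : ∀ j : Fin n, ∀ x ∈ passOn t t' j.castSucc.succ, r (w j.castSucc x) (w j.succ x))
    {x : V} {k i : Fin (n + 1)} (hki : k ≤ i) (hk : (t k).varOccurs x)
    (hi : (t' i).varOccurs x) : r (w k x) (w i x) :=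
  rel_of_forall_castSucc_succ (f := fun m => w m x) hrefl htrans hki
    fun j hkj hji => hw j x ⟨⟨k, hkj, hk⟩, ⟨i, hji, hi⟩⟩

end PassOn

section Eval

variable {M : Struc F ar}

theorem Tm.eqI_eval_of_forall_varOccurs (s : Tm F ar V)
    (hfn : ∀ f, s.fnOccurs f → ∀ a b : Fin (ar f) → M.D,
      (∀ i, M.eqI (a i) (b i)) → M.eqI (M.fnI f a) (M.fnI f b))
    (hcons : s.consOccurs → ∀ a b a' b', M.eqI a a' → M.eqI b b' →
      M.eqI (M.consI a b) (M.consI a' b'))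
    {v w : V → M.D} (h : ∀ x, s.varOccurs x → M.eqI (v x) (w x)) :
    M.eqI (s.eval M v) (s.eval M w) := by
  induction s with
  | var y => exact h y rfl
  | fn f args ih =>
    exact hfn f (.inl rfl) _ _ fun i =>
      ih i (fun g hg => hfn g (.inr ⟨i, hg⟩)) (fun hc => hcons ⟨i, hc⟩) fun x hx => h x ⟨i, hx⟩
  | cons a b iha ihb =>
    exact hcons trivial _ _ _ _
      (iha (fun g hg => hfn g (.inl hg)) (fun _ => hcons trivial) fun x hx => h x (.inl hx))
      (ihb (fun g hg => hfn g (.inr hg)) (fun _ => hcons trivial) fun x hx => h x (.inr hx))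

theorem IsModed.exists_eqI_eval {n : ℕ} {t t' : Fin (n + 1) → Tm F ar V} (ht : IsModed t t')
    (hequiv : Equivalence M.eqI)
    (hfn : ∀ f, (∃ i, (t i).fnOccurs f ∨ (t' i).fnOccurs f) → ∀ a b : Fin (ar f) → M.D,
      (∀ i, M.eqI (a i) (b i)) → M.eqI (M.fnI f a) (M.fnI f b))
    (hcons : (∃ i, (t i).consOccurs ∨ (t' i).consOccurs) → ∀ a b a' b',
      M.eqI a a' → M.eqI b b' → M.eqI (M.consI a b) (M.consI a' b'))
    {w : Fin (n + 1) → V → M.D}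
    (hw : ∀ j : Fin n, ∀ x ∈ passOn t t' j.castSucc.succ,
      M.eqI (w j.castSucc x) (w j.succ x)) :
    ∃ v : V → M.D, ∀ i, M.eqI ((t i).eval M v) ((t i).eval M (w i)) ∧
      M.eqI ((t' i).eval M v) ((t' i).eval M (w i)) := by
  have := M.nonempty
  have hdisj : Pairwise (Function.onFun Disjoint fun i => {x | (t i).varOccurs x}) :=
    fun i j hij => Set.disjoint_left.2 fun x hi hj => ht.not_varOccurs_and i j hij x ⟨hi, hj⟩
  obtain ⟨v, hv⟩ := exists_eqOn_of_pairwise_disjoint hdisj w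
  have hv_eqI {k x} (hk : (t k).varOccurs x) : M.eqI (v x) (w k x) := hv k hk ▸ hequiv.refl _
  refine ⟨v, fun i => ⟨?_, ?_⟩⟩
  · exact (t i).eqI_eval_of_forall_varOccurs (fun f hf => hfn f ⟨i, .inl hf⟩)
      (fun hc => hcons ⟨i, .inl hc⟩) fun x hx => hv_eqI hx
  · refine (t' i).eqI_eval_of_forall_varOccurs (fun f hf => hfn f ⟨i, .inr hf⟩)
      (fun hc => hcons ⟨i, .inr hc⟩) fun x hx => ?_
    obtain ⟨k, hki, hk⟩ := ht.exists_le_varOccurs i x hx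
    exact hequiv.trans (hv_eqI hk) (rel_of_forall_passOn hequiv.refl hequiv.trans hw hki hk hx)

theorem IsStackListOf.eq_var {St : V} {s : Tm F ar V} (hs : IsStackListOf ∅ St s) :
    s = .var St := by
  obtain ⟨L, hL, rfl⟩ := hs
  rw [List.eq_nil_iff_forall_not_mem.2 fun x hx => (hL x).1 hx]
  rfl

theorem eqI_of_eqI_eval_stackList (hinj : ConsInjective M) {L : List V} {St : V}
    {v w : V → M.D} (h : M.eqI ((stackList L St).eval M v) ((stackList L St).eval M w)) :
    M.eqI (v St) (w St) ∧ ∀ x ∈ L, M.eqI (v x) (w x) := by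
  induction L with
  | nil => exact ⟨h, List.forall_mem_nil _⟩
  | cons a L ih =>
    obtain ⟨hhead, htail⟩ := hinj _ _ _ _ h
    exact ⟨(ih htail).1, List.forall_mem_cons.2 ⟨hhead, (ih htail).2⟩⟩

theorem IsStackListOf.eqI_of_eqI_eval {S : Set V} {St : V} {s : Tm F ar V}
    (hs : IsStackListOf S St s) (hinj : ConsInjective M) {v w : V → M.D}
    (h : M.eqI (s.eval M v) (s.eval M w)) :
    ∀ x ∈ insert St S, M.eqI (v x) (w x) := by
  obtain ⟨L, hL, rfl⟩ := hs
  obtain ⟨hSt, hmem⟩ := eqI_of_eqI_eval_stackList hinj h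
  exact Set.forall_mem_insert.2 ⟨hSt, fun x hx => hmem x ((hL x).2 hx)⟩

theorem StackedRel.eqI_and_rel (hinj : ConsInjective M) (hequiv : Equivalence M.eqI)
    {r : M.D → M.D → Prop}
    (hr : ∀ x₁ x₂ y₁ y₂, M.eqI x₁ y₁ → M.eqI x₂ y₂ → r y₁ y₂ → r x₁ x₂)
    {z z' s x s' y : M.D} (h : StackedRel M r z z') (hz : M.eqI z (M.consI s x))
    (hz' : M.eqI z' (M.consI s' y)) : M.eqI s s' ∧ r x y := by
  obtain ⟨st, a, b, ha, hb, hab⟩ := h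
  obtain ⟨hs, hx⟩ := hinj _ _ _ _ (hequiv.trans (hequiv.symm hz) ha)
  obtain ⟨hs', hy⟩ := hinj _ _ _ _ (hequiv.trans (hequiv.symm hz') hb)
  exact ⟨hequiv.trans hs (hequiv.symm hs'), hr _ _ _ _ hx hy hab⟩

end Eval

theorem moded_to_chain_general {n : ℕ} {t t' : Fin (n + 1) → Tm F ar V} (ht : IsModed t t')
    {St : V} {Sg : Fin (n + 2) → Tm F ar V} (hSg : ∀ j, IsStackListOf (passOn t t' j) St (Sg j))
    {M : Struc F ar} {pI phatI : M.D → M.D → Prop} {qI qhatI : Fin n → M.D → M.D → Prop}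
    {hI : Fin (n + 1) → M.D → M.D → Prop}
    (hC : ∀ v : V → M.D,
      (∀ j : Fin n, qI j ((t' j.castSucc).eval M v) ((t j.succ).eval M v)) →
      pI ((t 0).eval M v) ((t' (Fin.last n)).eval M v))
    (hequiv : Equivalence M.eqI)
    (hfn : ∀ f, (∃ i, (t i).fnOccurs f ∨ (t' i).fnOccurs f) → ∀ a b : Fin (ar f) → M.D,
      (∀ i, M.eqI (a i) (b i)) → M.eqI (M.fnI f a) (M.fnI f b))
    (hq : ∀ j x₁ x₂ y₁ y₂, M.eqI x₁ y₁ → M.eqI x₂ y₂ → qI j y₁ y₂ → qI j x₁ x₂)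
    (hcons : ∀ a b a' b',
      M.eqI (M.consI a b) (M.consI a' b') ↔ (M.eqI a a' ∧ M.eqI b b'))
    (hphat : ∀ z z', StackedRel M pI z z' → phatI z z')
    (hqhat : ∀ j z z', qhatI j z z' → StackedRel M (qI j) z z')
    (hh : ∀ j z z', hI j z z' → ∃ v : V → M.D,
      M.eqI z ((Tm.cons (Sg j.castSucc) (t j)).eval M v) ∧
      M.eqI z' ((Tm.cons (Sg j.succ) (t' j)).eval M v))
    (u u' : Fin (n + 1) → M.D) (hu : ∀ j, hI j (u j) (u' j))
    (huq : ∀ j : Fin n, qhatI j (u' j.castSucc) (u j.succ)) :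
    phatI (u 0) (u' (Fin.last n)) := by
  have hinj : ConsInjective M := fun a b a' b' => (hcons a b a' b').1
  have hcongr {a b a' b'} (h : M.eqI a a') (h' : M.eqI b b') := (hcons a b a' b').2 ⟨h, h'⟩
  choose w hw hw' using fun j => hh j _ _ (hu j)
  have hlink (j : Fin n) :
      M.eqI ((Sg j.castSucc.succ).eval M (w j.castSucc)) ((Sg j.succ.castSucc).eval M (w j.succ)) ∧
        qI j ((t' j.castSucc).eval M (w j.castSucc)) ((t j.succ).eval M (w j.succ)) :=
    (hqhat j _ _ (huq j)).eqI_and_rel hinj hequiv (hq j) (hw' j.castSucc) (hw j.succ)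
  have hagree (j : Fin n) : ∀ x ∈ insert St (passOn t t' j.castSucc.succ),
      M.eqI (w j.castSucc x) (w j.succ x) :=
    (hSg _).eqI_of_eqI_eval hinj (hlink j).1
  obtain ⟨v, hv⟩ := ht.exists_eqI_eval hequiv hfn (fun _ _ _ _ _ => hcongr)
    fun j x hx => hagree j x (.inr hx)
  have hp := hC v fun j => hq j _ _ _ _ (hv _).2 (hv _).1 (hlink j).2
  have hstack : M.eqI (w 0 St) (w (Fin.last n) St) :=
    rel_of_forall_castSucc_succ (f := fun i => w i St) hequiv.refl hequiv.trans (Fin.zero_le _)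
      fun j _ _ => hagree j St (.inl rfl)
  have hfirst : Sg 0 = .var St := (passOn_zero ▸ hSg 0).eq_var
  have hlast : Sg (Fin.last (n + 1)) = .var St := (passOn_last ▸ hSg (Fin.last (n + 1))).eq_var
  have hin : M.eqI (u 0) (M.consI (w 0 St) ((t 0).eval M (w 0))) := by
    simpa only [Fin.castSucc_zero, hfirst, Tm.eval] using hw 0
  have hout : M.eqI (u' (Fin.last n))
      (M.consI (w (Fin.last n) St) ((t' (Fin.last n)).eval M (w (Fin.last n)))) := by
    simpa only [Fin.succ_last, hlast, Tm.eval] using hw' (Fin.last n)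
  exact hphat _ _ ⟨w 0 St, _, _,
    hequiv.trans hin (hcongr (hequiv.refl _) (hequiv.symm (hv _).1)),
    hequiv.trans hout (hcongr (hequiv.symm hstack) (hequiv.symm (hv _).2)), hp⟩

/-- **Moded-to-chain transformation.**  Let `C` be the moded clause
`p(t₀,tₙ′) ← q₁(t₀′,t₁), …, qₙ(t_{n-1}′,tₙ)` (`n ≥ 0`), let
`Πⱼ = (var(t₀) ∪ ⋯ ∪ var(t_{j-1})) ∩ (var(tⱼ′) ∪ ⋯ ∪ var(tₙ′))` and let `Σⱼ` be a
list `[X₁,…,X_d | St]` of the variables of `Πⱼ` followed by the (fresh) stack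
variable `St` (so `Σⱼ = St` when `Πⱼ = ∅`).  Then the chain clause `Ĉ`:
`p̂(U₀,Uₙ′) ← h₀(U₀,U₀′), q̂₁(U₀′,U₁), h₁(U₁,U₁′), …, q̂ₙ(U_{n-1}′,Uₙ), hₙ(Uₙ,Uₙ′)`
is logically implied by `C`, the standard equality theory for `C`, the «iff»
version of function substitutivity for the list constructor, and the completed
(«iff») definitions of `p̂(⟨St|X⟩,⟨St|Y⟩) ← p(X,Y)`, of
`q̂ⱼ(⟨St|X⟩,⟨St|Y⟩) ← qⱼ(X,Y)`, and of the unit clauses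
`hⱼ(⟨Σⱼ|tⱼ⟩,⟨Σ_{j+1}|tⱼ′⟩) ←`, where `p̂`, the `q̂ⱼ` and the `hⱼ` are (fresh)
predicate symbols not occurring in `C` (here interpreted by relations
`phatI, qhatI, hI` distinct from the interpretations `pI, qI` of `p, qⱼ`). -/
theorem moded_to_chain
    (F V : Type) (ar : F → ℕ) (n : ℕ)
    (t t' : Fin (n + 1) → Tm F ar V)
    -- the clause is moded:
    (hmoded1 : ∀ i : Fin (n + 1), ∀ x : V, (t' i).varOccurs x →
        ∃ k : Fin (n + 1), k ≤ i ∧ (t k).varOccurs x)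
    (hmoded2 : ∀ i j : Fin (n + 1), i ≠ j →
        ∀ x : V, ¬((t i).varOccurs x ∧ (t j).varOccurs x))
    -- the fresh stack variable:
    (St : V)
    (hSt : ∀ i : Fin (n + 1), ¬ (t i).varOccurs St ∧ ¬ (t' i).varOccurs St)
    -- the pass-on sets Πⱼ:
    (Pi : Fin (n + 2) → Set V)
    (hPi : ∀ j : Fin (n + 2), Pi j =
      {x | (∃ i : Fin (n + 1), (i : ℕ) < (j : ℕ) ∧ (t i).varOccurs x) ∧
           (∃ k : Fin (n + 1), (j : ℕ) ≤ (k : ℕ) ∧ (t' k).varOccurs x)})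
    -- the terms Σⱼ = [X₁,…,X_d | St] with {X₁,…,X_d} = Πⱼ:
    (Sg : Fin (n + 2) → Tm F ar V)
    (hSg : ∀ j : Fin (n + 2), ∃ L : List V, L.Nodup ∧
      (∀ x : V, x ∈ L ↔ x ∈ Pi j) ∧ Sg j = stackList L St)
    -- a structure (with fresh interpretations for p̂, q̂ⱼ, hⱼ):
    (M : Struc F ar)
    (pI : M.D → M.D → Prop) (qI : Fin n → M.D → M.D → Prop)
    (phatI : M.D → M.D → Prop) (qhatI : Fin n → M.D → M.D → Prop)
    (hI : Fin (n + 1) → M.D → M.D → Prop)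
    -- M satisfies C:
    (hC : ∀ v : V → M.D,
      (∀ j : Fin n, qI j ((t' j.castSucc).eval M v) ((t j.succ).eval M v)) →
      pI ((t 0).eval M v) ((t' (Fin.last n)).eval M v))
    -- M satisfies the standard equality theory for C:
    (hrefl : ∀ d : M.D, M.eqI d d)
    (hsymm : ∀ d e : M.D, M.eqI e d → M.eqI d e)
    (htrans : ∀ c d e : M.D, M.eqI c d → M.eqI d e → M.eqI c e)
    (hfnsub : ∀ f : F, (∃ i : Fin (n + 1), (t i).fnOccurs f ∨ (t' i).fnOccurs f) →
      ∀ a b : Fin (ar f) → M.D, (∀ i, M.eqI (a i) (b i)) →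
        M.eqI (M.fnI f a) (M.fnI f b))
    (hconssub : (∃ i : Fin (n + 1), (t i).consOccurs ∨ (t' i).consOccurs) →
      ∀ a b a' b' : M.D, M.eqI a a' → M.eqI b b' →
        M.eqI (M.consI a b) (M.consI a' b'))
    (hpsub : ∀ x₁ x₂ y₁ y₂ : M.D, M.eqI x₁ y₁ → M.eqI x₂ y₂ →
      pI y₁ y₂ → pI x₁ x₂)
    (hqsub : ∀ j : Fin n, ∀ x₁ x₂ y₁ y₂ : M.D, M.eqI x₁ y₁ → M.eqI x₂ y₂ →
      qI j y₁ y₂ → qI j x₁ x₂)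
    -- M satisfies the «iff» version of function substitutivity for cons:
    (hconsiff : ∀ a b a' b' : M.D,
      M.eqI (M.consI a b) (M.consI a' b') ↔ (M.eqI a a' ∧ M.eqI b b'))
    -- M satisfies the completed definitions of p̂, the q̂ⱼ and the hⱼ:
    (hphat : ∀ z z' : M.D, phatI z z' ↔
      ∃ st x y : M.D, M.eqI z (M.consI st x) ∧ M.eqI z' (M.consI st y) ∧ pI x y)
    (hqhat : ∀ j : Fin n, ∀ z z' : M.D, qhatI j z z' ↔
      ∃ st x y : M.D, M.eqI z (M.consI st x) ∧ M.eqI z' (M.consI st y) ∧ qI j x y)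
    (hh : ∀ j : Fin (n + 1), ∀ z z' : M.D, hI j z z' ↔
      ∃ v : V → M.D,
        M.eqI z ((Tm.cons (Sg j.castSucc) (t j)).eval M v) ∧
        M.eqI z' ((Tm.cons (Sg j.succ) (t' j)).eval M v)) :
    -- then M satisfies the chain clause Ĉ:
    ∀ u u' : Fin (n + 1) → M.D,
      (∀ j : Fin (n + 1), hI j (u j) (u' j)) →
      (∀ j : Fin n, qhatI j (u' j.castSucc) (u j.succ)) →
      phatI (u 0) (u' (Fin.last n)) := by
  have hSg' (j) : IsStackListOf (passOn t t' j) St (Sg j) :=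
    have ⟨L, _, hL, hS⟩ := hSg j
    ⟨L, fun x => (hL x).trans (Set.ext_iff.1 (hPi j) x), hS⟩
  exact moded_to_chain_general ⟨hmoded1, hmoded2⟩ hSg' hC ⟨hrefl, hsymm _ _, htrans _ _ _⟩ hfnsub
    hqsub hconsiff (fun z z' => (hphat z z').2) (fun j z z' => (hqhat j z z').1)
    (fun j z z' => (hh j z z').1)

end ModedChain
end

section
/- G-chain property of the moded transformation (variable-set form): Let V₀,…,Vₙ and W₀,…,Wₙ be sets (of variables) such that Wᵢ ⊆ V₀ ∪ ⋯ ∪ Vᵢ for every i = 0,…,n, and Vᵢ ∩ Vⱼ = ∅ for all i ≠ j. For j = 0,…,n+1 define Πⱼ = (V₀ ∪ ⋯ ∪ V_{j-1}) ∩ (Wⱼ ∪ ⋯ ∪ Wₙ) (with the empty union equal to ∅, so Π₀ = ∅ and Π_{n+1} = ∅). Then Π_{j+1} ∪ Wⱼ ⊆ Πⱼ ∪ Vⱼ for every j = 0,…,n. Consequently, in the chain form of a moded clause every unit clause hⱼ(⟨Σⱼ|tⱼ⟩,⟨Σ_{j+1}|tⱼ′⟩) ← satisfies var(output) ⊆ var(input),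 i.e., the chain form of a moded program is a G-chain program. -/
/-!
At position `j` of a clause body, both `Π_{j+1}` and `Wⱼ` are contained in
`(V₀ ∪ ⋯ ∪ Vⱼ) ∩ (Wⱼ ∪ ⋯ ∪ Wₙ)`: the former by monotonicity, the latter by modedness.
Distributing the intersection over `(V₀ ∪ ⋯ ∪ V_{j-1}) ∪ Vⱼ` gives a subset of `Πⱼ ∪ Vⱼ`.
-/

/-- The variables live at a cut of a clause body: those introduced by some `V i` before the cut
and used by some `W k` after it. The cut is encoded by the set `S` of positions before it, so that
the paper's `Πⱼ` is the case `S = {i | i < j}`. -/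
def liveVars {ι α : Type*} (V W : ι → Set α) (S : Set ι) : Set α :=
  (⋃ i ∈ S, V i) ∩ ⋃ k ∈ Sᶜ, W k

theorem liveVars_insert_subset {ι α : Type*} (V W : ι → Set α) (S : Set ι) (j : ι) :
    liveVars V W (insert j S) ⊆ (⋃ i ∈ insert j S, V i) ∩ ⋃ k ∈ Sᶜ, W k :=
  Set.inter_subset_inter_right _ <|
    Set.biUnion_subset_biUnion_left <| Set.compl_subset_compl.2 <| Set.subset_insert j S

theorem gchain_property_of_moded_transformation_general {ι α : Type*} {V W : ι → Set α}
    {S : Set ι} {j : ι} (hj : j ∉ S) (hW : W j ⊆ ⋃ i ∈ insert j S, V i) :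
    liveVars V W (insert j S) ∪ W j ⊆ liveVars V W S ∪ V j :=
  calc liveVars V W (insert j S) ∪ W j
    _ ⊆ (⋃ i ∈ insert j S, V i) ∩ ⋃ k ∈ Sᶜ, W k :=
      Set.union_subset (liveVars_insert_subset V W S j) <|
        Set.subset_inter hW <| Set.subset_biUnion_of_mem (u := W) (Set.mem_compl hj)
    _ = (V j ∩ ⋃ k ∈ Sᶜ, W k) ∪ liveVars V W S := by
      rw [Set.biUnion_insert, Set.union_inter_distrib_right, liveVars]
    _ ⊆ liveVars V W S ∪ V j := by
      rw [Set.union_comm]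
      exact Set.union_subset_union_right _ Set.inter_subset_left

/-- **G-chain property of the moded transformation (variable-set form).**
Let `V₀,…,Vₙ` and `W₀,…,Wₙ` be sets of variables with `Wᵢ ⊆ V₀ ∪ ⋯ ∪ Vᵢ` for all
`i` and the `Vᵢ` pairwise disjoint.  For `j = 0,…,n+1` let
`Πⱼ = (V₀ ∪ ⋯ ∪ V_{j-1}) ∩ (Wⱼ ∪ ⋯ ∪ Wₙ)` (empty unions being `∅`).  Then
`Π_{j+1} ∪ Wⱼ ⊆ Πⱼ ∪ Vⱼ` for every `j = 0,…,n`; i.e. in the chain form of a moded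
clause every unit clause `hⱼ(⟨Σⱼ|tⱼ⟩,⟨Σ_{j+1}|tⱼ′⟩) ←` satisfies
`var(output) ⊆ var(input)`, so the chain form of a moded program is a G-chain
program. -/
theorem gchain_property_of_moded_transformation
    (α : Type*) (n : ℕ) (V W : Fin (n + 1) → Set α)
    (hW : ∀ i : Fin (n + 1), W i ⊆ ⋃ k : Fin (n + 1), ⋃ (_ : k ≤ i), V k)
    (hV : ∀ i j : Fin (n + 1), i ≠ j → V i ∩ V j = ∅)
    (Pi : Fin (n + 2) → Set α)
    (hPi : ∀ j : Fin (n + 2), Pi j =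
      (⋃ i : Fin (n + 1), ⋃ (_ : (i : ℕ) < (j : ℕ)), V i) ∩
      (⋃ k : Fin (n + 1), ⋃ (_ : (j : ℕ) ≤ (k : ℕ)), W k)) :
    ∀ j : Fin (n + 1), Pi j.succ ∪ W j ⊆ Pi j.castSucc ∪ V j := by
  intro j
  simpa [hPi, liveVars] using
    gchain_property_of_moded_transformation_general (Set.self_notMem_Iio (a := j))
      (by simpa only [Set.Iio_insert, Set.mem_Iic] using hW j)
end
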